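/- arXiv:1408.4093 — 2 statements merged into one kernel-verified Lean document; each statement's English description precedes it below -/
import Mathlib

section
/- Let d ≥ 2, let P be a finite poset, and let A be a permutation d-matrix of size |P|^d whose 1-entries are in a bijection β with the elements of P such that p <_P p' iff every coordinate of the position of β(p) is strictly smaller than the corresponding coordinate of the position of β(p'). Let K be a nonnegative real with ex_d(n, A) ≤ K·n^{d−1} for all positive integers n. Then every induced P-free family F of subsets of [n] satisfies the shifted Lubell bound ∑_{F ∈ F} 1 / C(n + 2d − 2, |F| + d − 1) ≤ K · (d−1)! / (d−1)^{d−1}. -/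
/-- Number of 1-entries of a 0-1 hypermatrix. -/
def ones {ι : Type*} [Fintype ι] [DecidableEq ι] {nn : ι → ℕ}
    (M : (∀ j, Fin (nn j)) → Bool) : ℕ :=
  (Finset.univ.filter fun i => M i = true).card

/-- The hypermatrix `M` contains the hypermatrix `A`: there are strictly increasing
maps, one for each coordinate, sending 1-entries of `A` to 1-entries of `M`. -/
def MatContains {ι : Type*} {kk nn : ι → ℕ}
    (M : (∀ j, Fin (nn j)) → Bool) (A : (∀ j, Fin (kk j)) → Bool) : Prop :=
  ∃ f : ∀ j, Fin (kk j) → Fin (nn j), (∀ j, StrictMono (f j)) ∧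
    ∀ i, A i = true → M (fun j => f j (i j)) = true

/-- A permutation d-matrix of size k^d: exactly `k` ones, and for each coordinate
direction `j` and each value `v` there is exactly one 1-entry with j-th coordinate `v`. -/
def IsPermMatrix {d k : ℕ} (A : (Fin d → Fin k) → Bool) : Prop :=
  (Finset.univ.filter fun i => A i = true).card = k ∧
    ∀ (j : Fin d) (v : Fin k), ∃! i : Fin d → Fin k, A i = true ∧ i j = v

/-- The extremal number: the maximum number of 1-entries of an `A`-free
hypermatrix of size `nn`. -/
noncomputable def exd {ι : Type*} [Fintype ι] [DecidableEq ι] (nn : ι → ℕ) {kk : ι → ℕ}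
    (A : (∀ j, Fin (kk j)) → Bool) : ℕ :=
  sSup {m : ℕ | ∃ M : (∀ j, Fin (nn j)) → Bool, ¬ MatContains M A ∧ ones M = m}

/-- The family `F` of subsets of `[n]` contains the poset `P` as an induced subposet. -/
def ContainsInduced (P : Type*) [PartialOrder P] {n : ℕ}
    (F : Finset (Finset (Fin n))) : Prop :=
  ∃ α : P → Finset (Fin n), Function.Injective α ∧ (∀ p, α p ∈ F) ∧
    ∀ x y : P, x < y ↔ α x ⊂ α y

/-!
Arrange the ground set into lists of lengths `c j`, one for each coordinate direction. A grid point
`i` with `0 ≤ i j ≤ c j` selects the union of the initial segments of lengths `i j`, and inclusion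
of these unions is the coordinatewise order. Hence the grid points whose union lies in `F` form a
hypermatrix with sides `c j + 1`, and a copy of `A` in it would be an induced copy of `P` in `F`.

Write `e = d - 1`. Averaging over subcubes whose side is the shortest side of a box turns the
hypothesis on cubes into the bound `K` times the product of the other `e` sides for the number of
ones in an `A`-free box, and AM-GM bounds this by `K * ((n + d) / e) ^ e`.

Over all `n! * C(n + e, e)` arrangements, a set of size `k` is selected
`C(k + e, e) * C(n - k + e, e) * k! * (n - k)! = (n + 2e)! / (e!² * C(n + 2e, k + e))` times. So
the shifted Lubell sum is a multiple of the average number of ones, and the theorem follows from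
`(n + e)! * (n + e + 1) ^ e ≤ (n + 2e)!`.
-/

open Finset
open scoped Nat

/-! ### Enumerative and order-theoretic preliminaries -/

theorem card_equiv_mem_iff {X Y : Type*} [Fintype X] [Fintype Y] [DecidableEq X] [DecidableEq Y]
    (hXY : Fintype.card X = Fintype.card Y) {S : Finset X} {T : Finset Y} (hST : #S = #T) :
    #{σ : X ≃ Y | ∀ x, x ∈ S ↔ σ x ∈ T} = (#S)! * (Fintype.card X - #S)! := by
  obtain ⟨τ, hτ⟩ : (Numbering.prefixed T).Nonempty := by
    rw [← card_pos, Numbering.card_prefixed]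
    positivity
  rw [Numbering.mem_prefixed] at hτ
  rw [← Numbering.card_prefixed]
  -- Following `σ` by `τ` gives a numbering of `X`, of which `S` must be a prefix.
  refine card_equiv ((Equiv.refl X).equivCongr (τ.trans (finCongr hXY.symm))) fun σ => ?_
  rw [Numbering.mem_prefixed, mem_filter_univ]
  refine forall_congr' fun x => ?_
  rw [hτ (σ x), hST]
  rfl

theorem card_piAntidiag_of_card_eq_add_one {ι : Type*} [DecidableEq ι] {s : Finset ι} {e : ℕ}
    (hs : #s = e + 1) (n : ℕ) : #(piAntidiag s n) = (n + e).choose e := by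
  have hcard : #(finsuppAntidiag s n) = #(piAntidiag s n) := by
    rw [finsuppAntidiag, card_map, card_attach]
  rw [← hcard, card_finsuppAntidiag_nat_eq_choose, hs, Nat.add_right_comm, Nat.add_sub_cancel,
    add_comm e, Nat.choose_symm_add]

theorem card_powersetCard_filter_mem_mul_card {α : Type*} [DecidableEq α] {s : Finset α} {a : α}
    (ha : a ∈ s) (m : ℕ) : #{t ∈ powersetCard m s | a ∈ t} * #s = (#s).choose m * m := by
  obtain _ | m := m
  · simp [filter_singleton]
  obtain ⟨N, hN⟩ : ∃ N, #s = N + 1 := Nat.exists_eq_add_one.2 (card_pos.2 ⟨a, ha⟩)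
  have hcard : #{t ∈ powersetCard (m + 1) s | a ∈ t} = N.choose m := by
    simpa [hN] using card_filter_powersetCard_subset {a} s (m + 1) (by simpa using ha) (by simp)
  rw [hcard, hN, mul_comm, Nat.add_one_mul_choose_eq]

theorem choose_mul_choose_mul_factorial (k l e : ℕ) :
    (k + e).choose e * (l + e).choose e * (k ! * l !) *
      (e ! ^ 2 * (k + l + 2 * e).choose (k + e)) = (k + l + 2 * e)! := by
  have hk := Nat.add_choose_mul_factorial_mul_factorial k e
  have hl := Nat.add_choose_mul_factorial_mul_factorial l e
  have hkl := Nat.add_choose_mul_factorial_mul_factorial (k + e) (l + e)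
  rw [← Nat.choose_symm_add, ← hk, ← hl, show k + e + (l + e) = k + l + 2 * e by ring] at hkl
  rw [← hkl]
  ring

theorem prod_le_sum_div_card_pow {ι : Type*} (s : Finset ι) {z : ι → ℝ} (hz : ∀ i ∈ s, 0 ≤ z i) :
    ∏ i ∈ s, z i ≤ ((∑ i ∈ s, z i) / #s) ^ #s := by
  obtain rfl | hs := s.eq_empty_or_nonempty
  · simp
  have hcard : (0 : ℝ) < #s := by exact_mod_cast hs.card_pos
  have hgm := Real.geom_mean_le_arith_mean s (fun _ => 1) z (by simp) (by simpa using hs) hz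
  simp only [Real.rpow_one, sum_const, nsmul_eq_mul, mul_one, one_mul] at hgm
  rwa [Real.rpow_inv_le_iff_of_pos (prod_nonneg hz) (div_nonneg (sum_nonneg hz) hcard.le) hcard,
    Real.rpow_natCast] at hgm

theorem forall_lt_iff_lt_of_injective_apply {ι P : Type*} [Nonempty ι] {π : ι → Type*}
    [∀ j, PartialOrder (π j)] {γ : P → ∀ j, π j} (hγ : ∀ j, Function.Injective fun p => γ p j)
    {p q : P} : (∀ j, γ p j < γ q j) ↔ γ p < γ q := by
  refine ⟨fun h => lt_of_strongLT h, fun h j => (h.le j).lt_of_ne fun hj => ?_⟩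
  exact h.ne (congrArg γ (hγ j hj))

/-! ### Hypermatrices avoiding a pattern -/

theorem IsPermMatrix.eq_of_apply_eq {d k : ℕ} {A : (Fin d → Fin k) → Bool} (hA : IsPermMatrix A)
    {i i' : Fin d → Fin k} (hi : A i = true) (hi' : A i' = true) {j : Fin d} (h : i j = i' j) :
    i = i' :=
  (hA.2 j (i' j)).unique ⟨hi, h⟩ ⟨hi', rfl⟩

section Averaging

variable {ι : Type*} {kk mm nn : ι → ℕ} {A : (∀ j, Fin (kk j)) → Bool}
  {M : (∀ j, Fin (nn j)) → Bool}

theorem MatContains.of_submatrix {f : ∀ j, Fin (mm j) → Fin (nn j)} (hf : ∀ j, StrictMono (f j))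
    (h : MatContains (fun t => M fun j => f j (t j)) A) : MatContains M A := by
  obtain ⟨g, hg, hgA⟩ := h
  exact ⟨fun j => f j ∘ g j, fun j => (hf j).comp (hg j), hgA⟩

variable [Fintype ι] [DecidableEq ι]

theorem ones_le_exd (hM : ¬ MatContains M A) : ones M ≤ exd nn A := by
  refine le_csSup ⟨Fintype.card (∀ j, Fin (nn j)), ?_⟩ ⟨M, hM, rfl⟩
  rintro _ ⟨M', -, rfl⟩
  exact card_le_univ _

theorem card_filter_mem_le_exd (hM : ¬ MatContains M A) {S : ∀ j, Finset (Fin (nn j))}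
    (hS : ∀ j, #(S j) = mm j) : #{i | M i = true ∧ ∀ j, i j ∈ S j} ≤ exd mm A := by
  let f j : Fin (mm j) ↪o Fin (nn j) := (S j).orderEmbOfFin (hS j)
  have hfree : ¬ MatContains (fun t => M fun j => f j (t j)) A :=
    fun h => hM (h.of_submatrix fun j => (f j).strictMono)
  refine (card_le_card_of_surjOn (fun t j => f j (t j)) fun i hi => ?_).trans (ones_le_exd hfree)
  obtain ⟨hMi, hiS⟩ := (mem_filter_univ i).1 hi
  have hrange : ∀ j, ∃ t, f j t = i j := fun j => by
    rw [← Set.mem_range, range_orderEmbOfFin]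
    exact hiS j
  choose t ht using hrange
  obtain rfl : (fun j => f j (t j)) = i := funext ht
  exact ⟨t, (mem_filter_univ t).2 hMi, rfl⟩

theorem sum_piFinset_card_filter_mem (M : (∀ j, Fin (nn j)) → Bool)
    (W : ∀ j, Finset (Finset (Fin (nn j)))) :
    ∑ S ∈ Fintype.piFinset W, #{i | M i = true ∧ ∀ j, i j ∈ S j} =
      ∑ i with M i = true, ∏ j, #{s ∈ W j | i j ∈ s} := by
  simp_rw [← filter_filter, card_filter _ (filter _ _)]
  rw [sum_comm]
  refine sum_congr rfl fun i _ => ?_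
  rw [← card_filter, ← Fintype.card_piFinset]
  congr 1
  ext S
  simp only [mem_filter, Fintype.mem_piFinset, forall_and]

/-- A 1-entry of `M` survives in a proportion `∏ j, mm j / nn j` of the submatrices of
size `mm`. -/
theorem ones_mul_prod_le_exd_mul_prod (hM : ¬ MatContains M A) (hmn : ∀ j, mm j ≤ nn j) :
    ones M * ∏ j, mm j ≤ exd mm A * ∏ j, nn j := by
  let W j : Finset (Finset (Fin (nn j))) := powersetCard (mm j) univ
  let N := ∏ j, (nn j).choose (mm j)
  have hupper : ∑ S ∈ Fintype.piFinset W, #{i | M i = true ∧ ∀ j, i j ∈ S j} ≤ N * exd mm A := by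
    have hN : #(Fintype.piFinset W) = N := by simp [W, N]
    rw [← hN, ← smul_eq_mul]
    exact sum_le_card_nsmul _ _ _ fun S hS => card_filter_mem_le_exd hM fun j =>
      (mem_powersetCard.1 (Fintype.mem_piFinset.1 hS j)).2
  have hsurvive (i : ∀ j, Fin (nn j)) :
      (∏ j, #{s ∈ W j | i j ∈ s}) * ∏ j, nn j = N * ∏ j, mm j := by
    simp only [N, ← prod_mul_distrib]
    exact prod_congr rfl fun j _ => by
      simpa using card_powersetCard_filter_mem_mul_card (mem_univ (i j)) (mm j)
  refine Nat.le_of_mul_le_mul_left ?_ (prod_pos fun j _ => Nat.choose_pos (hmn j) : 0 < N)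
  calc N * (ones M * ∏ j, mm j)
      = (∑ i with M i = true, ∏ j, #{s ∈ W j | i j ∈ s}) * ∏ j, nn j := by
        simp only [sum_mul, hsurvive, sum_const, smul_eq_mul, ones]
        ring
    _ ≤ N * exd mm A * ∏ j, nn j := by
        rw [← sum_piFinset_card_filter_mem]
        gcongr
    _ = N * (exd mm A * ∏ j, nn j) := mul_assoc _ _ _

theorem ones_le_mul_prod_erase {e : ℕ} (hι : Fintype.card ι = e + 1) {K : ℝ}
    (hM : ¬ MatContains M A) {j₀ : ι} (hpos : 0 < nn j₀) (hmin : ∀ j, nn j₀ ≤ nn j)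
    (hex : (exd (fun _ : ι => nn j₀) A : ℝ) ≤ K * (nn j₀ : ℝ) ^ e) :
    (ones M : ℝ) ≤ K * ∏ j ∈ univ.erase j₀, (nn j : ℝ) := by
  have hm : (0 : ℝ) < nn j₀ := by exact_mod_cast hpos
  have haverage : (ones M : ℝ) * (nn j₀ : ℝ) ^ (e + 1) ≤
      exd (fun _ : ι => nn j₀) A * ∏ j, (nn j : ℝ) := by
    have h := ones_mul_prod_le_exd_mul_prod hM hmin
    rw [prod_const, card_univ, hι] at h
    exact_mod_cast h
  refine le_of_mul_le_mul_right ?_ (pow_pos hm (e + 1))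
  calc (ones M : ℝ) * (nn j₀ : ℝ) ^ (e + 1)
      ≤ exd (fun _ : ι => nn j₀) A * ∏ j, (nn j : ℝ) := haverage
    _ ≤ K * (nn j₀ : ℝ) ^ e * ∏ j, (nn j : ℝ) := by gcongr
    _ = K * (∏ j ∈ univ.erase j₀, (nn j : ℝ)) * (nn j₀ : ℝ) ^ (e + 1) := by
        rw [← mul_prod_erase univ (fun j => (nn j : ℝ)) (mem_univ j₀)]
        ring

theorem ones_le_mul_sum_div_pow {e : ℕ} (hι : Fintype.card ι = e + 1) {K : ℝ}
    (hex : ∀ m : ℕ, 0 < m → (exd (fun _ : ι => m) A : ℝ) ≤ K * (m : ℝ) ^ e)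
    (hM : ¬ MatContains M A) (hnn : ∀ j, 0 < nn j) :
    (ones M : ℝ) ≤ K * ((∑ j, (nn j : ℝ)) / e) ^ e := by
  have hK : 0 ≤ K := by simpa using (Nat.cast_nonneg _).trans (hex 1 one_pos)
  have : Nonempty ι := Fintype.card_pos_iff.1 (by omega)
  obtain ⟨j₀, -, hj₀⟩ := exists_min_image univ nn univ_nonempty
  have hcard : #(univ.erase j₀) = e := by simp [hι]
  calc (ones M : ℝ) ≤ K * ∏ j ∈ univ.erase j₀, (nn j : ℝ) :=
        ones_le_mul_prod_erase hι hM (hnn j₀) (fun j => hj₀ j (mem_univ j)) (hex _ (hnn j₀))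
    _ ≤ K * ((∑ j ∈ univ.erase j₀, (nn j : ℝ)) / e) ^ e := by
        rw [← hcard]
        gcongr
        exact prod_le_sum_div_card_pow _ fun _ _ => Nat.cast_nonneg _
    _ ≤ K * ((∑ j, (nn j : ℝ)) / e) ^ e := by
        gcongr
        exact subset_univ _

end Averaging

/-! ### Traces of a set family on products of chains -/

section Trace

variable {ι : Type*} [Fintype ι] {c : ι → ℕ}

/-- The cells in the initial segments of lengths `i j` of disjoint lists of lengths `c j`. -/
def initialCells (i : ∀ j, Fin (c j + 1)) : Finset (Σ j, Fin (c j)) :=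
  univ.sigma fun j => {t | (t : ℕ) < i j}

theorem mem_initialCells {i : ∀ j, Fin (c j + 1)} {y : Σ j, Fin (c j)} :
    y ∈ initialCells i ↔ (y.2 : ℕ) < i y.1 := by
  simp [initialCells]

theorem card_initialCells (i : ∀ j, Fin (c j + 1)) : #(initialCells i) = ∑ j, (i j : ℕ) := by
  rw [initialCells, card_sigma]
  refine sum_congr rfl fun j _ => ?_
  rw [Fin.card_filter_val_lt, min_eq_right (i j).is_le]

theorem initialCells_subset_iff {i i' : ∀ j, Fin (c j + 1)} :
    initialCells i ⊆ initialCells i' ↔ i ≤ i' := by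
  refine ⟨fun h j => ?_, fun h y hy =>
    mem_initialCells.2 ((mem_initialCells.1 hy).trans_le (h y.1))⟩
  by_contra! hlt
  let y : Σ j, Fin (c j) := ⟨j, i' j, (Fin.lt_def.1 hlt).trans_le (i j).is_le⟩
  have hy : y ∈ initialCells i := mem_initialCells.2 hlt
  exact (mem_initialCells.1 (h hy)).false

variable {α : Type*}

/-- The bijection `σ` arranges `α` into lists of lengths `c j`. This is the union of the initial
segments of lengths `i j` of these lists, as an order embedding of the grid of all `i`. -/
def prefixUnion (σ : α ≃ Σ j, Fin (c j)) : (∀ j, Fin (c j + 1)) ↪o Finset α :=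
  OrderEmbedding.ofMapLEIff (fun i => (initialCells i).map σ.symm.toEmbedding) fun _ _ =>
    map_subset_map.trans initialCells_subset_iff

theorem mem_prefixUnion {σ : α ≃ Σ j, Fin (c j)} {i : ∀ j, Fin (c j + 1)} {x : α} :
    x ∈ prefixUnion σ i ↔ σ x ∈ initialCells i :=
  mem_map_equiv

theorem card_prefixUnion (σ : α ≃ Σ j, Fin (c j)) (i : ∀ j, Fin (c j + 1)) :
    #(prefixUnion σ i) = ∑ j, (i j : ℕ) :=
  (card_map _).trans (card_initialCells i)

/-- The hypermatrix recording which unions of initial segments of the lists given by `σ` belong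
to `F`. -/
def traceMatrix [DecidableEq α] (F : Finset (Finset α)) (σ : α ≃ Σ j, Fin (c j)) :
    (∀ j, Fin (c j + 1)) → Bool :=
  fun i => decide (prefixUnion σ i ∈ F)

theorem containsInduced_of_matContains_traceMatrix [Nonempty ι] {P : Type*} [PartialOrder P]
    {kk : ι → ℕ} {A : (∀ j, Fin (kk j)) → Bool} {β : P → ∀ j, Fin (kk j)}
    (hβA : ∀ p, A (β p) = true) (hβinj : ∀ j, Function.Injective fun p => β p j)
    (hβord : ∀ p q : P, p < q ↔ ∀ j, β p j < β q j)
    {n : ℕ} {F : Finset (Finset (Fin n))} {σ : Fin n ≃ Σ j, Fin (c j)}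
    (h : MatContains (traceMatrix F σ) A) : ContainsInduced P F := by
  obtain ⟨f, hf, hfA⟩ := h
  let γ (p : P) : ∀ j, Fin (c j + 1) := fun j => f j (β p j)
  have hγinj j : Function.Injective fun p => γ p j := (hf j).injective.comp (hβinj j)
  refine ⟨fun p => prefixUnion σ (γ p), (prefixUnion σ).injective.comp fun p q hpq => ?_,
    fun p => of_decide_eq_true (hfA (β p) (hβA p)), fun p q => ?_⟩
  · exact hγinj (Classical.arbitrary ι) (congrFun hpq _)
  · calc p < q ↔ ∀ j, γ p j < γ q j := by simp only [hβord, γ, (hf _).lt_iff_lt]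
      _ ↔ γ p < γ q := forall_lt_iff_lt_of_injective_apply hγinj
      _ ↔ prefixUnion σ (γ p) ⊂ prefixUnion σ (γ q) := (prefixUnion σ).lt_iff_lt.symm

end Trace

/-! ### Double counting -/

section DoubleCounting

variable {ι : Type*} [Fintype ι] [DecidableEq ι]

/-- A pair of weak compositions `a` of `k` and `b` of `l` amounts to the list lengths `a + b`
together with the grid point `a`. -/
theorem sum_card_filter_sum_eq {e : ℕ} (hι : Fintype.card ι = e + 1) (k l : ℕ) :
    ∑ c ∈ piAntidiag (univ : Finset ι) (k + l), #{i : ∀ j, Fin (c j + 1) | ∑ j, (i j : ℕ) = k} =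
      (k + e).choose e * (l + e).choose e := by
  rw [← card_piAntidiag_of_card_eq_add_one hι, ← card_piAntidiag_of_card_eq_add_one hι,
    ← card_product, ← card_sigma]
  refine card_nbij (fun x => (fun j => (x.2 j : ℕ), fun j => x.1 j - x.2 j)) ?_ ?_ ?_
  · rintro ⟨c, i⟩ hci
    simp only [mem_coe, mem_sigma, mem_piAntidiag, mem_univ, implies_true, and_true,
      mem_filter_univ] at hci
    obtain ⟨hc, hi⟩ := hci
    have hsub : ∑ j, (c j - i j) = l := by
      rw [sum_tsub_distrib _ fun j _ => (i j).is_le, hc, hi, Nat.add_sub_cancel_left]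
    simp [hi, hsub]
  · rintro ⟨c, i⟩ - ⟨c', i'⟩ - h
    obtain ⟨hi, hsub⟩ := Prod.ext_iff.1 h
    obtain rfl : c = c' := funext fun j => by
      have hi_j := congrFun hi j
      have hsub_j := congrFun hsub j
      have := (i j).is_le
      have := (i' j).is_le
      dsimp only at hi_j hsub_j
      omega
    obtain rfl : i = i' := funext fun j => Fin.ext (congrFun hi j)
    rfl
  · rintro ⟨a, b⟩ hab
    simp only [coe_product, Set.mem_prod, mem_coe, mem_piAntidiag, mem_univ, implies_true,
      and_true] at hab
    refine ⟨⟨a + b, fun j => ⟨a j, by simp⟩⟩, ?_, by simp⟩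
    simp [hab, sum_add_distrib]

variable {α : Type*} [Fintype α] [DecidableEq α] {c : ι → ℕ}

theorem card_filter_prefixUnion_eq (hc : ∑ j, c j = Fintype.card α) {i : ∀ j, Fin (c j + 1)}
    {S : Finset α} (hi : ∑ j, (i j : ℕ) = #S) :
    #{σ : α ≃ Σ j, Fin (c j) | prefixUnion σ i = S} = (#S)! * (Fintype.card α - #S)! := by
  have hcard : Fintype.card α = Fintype.card (Σ j, Fin (c j)) := by simp [hc]
  rw [← card_equiv_mem_iff hcard (T := initialCells i) (by rw [card_initialCells, hi])]
  simp only [Finset.ext_iff, mem_prefixUnion, Iff.comm]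

theorem sum_ones_traceMatrix (hc : ∑ j, c j = Fintype.card α) (F : Finset (Finset α)) :
    ∑ σ : α ≃ Σ j, Fin (c j), ones (traceMatrix F σ) =
      ∑ S ∈ F, #{i : ∀ j, Fin (c j + 1) | ∑ j, (i j : ℕ) = #S} *
        ((#S)! * (Fintype.card α - #S)!) := by
  have hfiber (σ : α ≃ Σ j, Fin (c j)) :
      ones (traceMatrix F σ) = ∑ S ∈ F, #{i : ∀ j, Fin (c j + 1) | prefixUnion σ i = S} := by
    simp only [ones, traceMatrix, decide_eq_true_eq, card_filter]
    rw [sum_comm]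
    simp only [sum_ite_eq]
  simp only [hfiber]
  rw [sum_comm]
  refine sum_congr rfl fun S _ => ?_
  calc ∑ σ : α ≃ Σ j, Fin (c j), #{i : ∀ j, Fin (c j + 1) | prefixUnion σ i = S}
      = ∑ i : ∀ j, Fin (c j + 1), #{σ : α ≃ Σ j, Fin (c j) | prefixUnion σ i = S} :=
        sum_card_bipartiteAbove_eq_sum_card_bipartiteBelow _
    _ = ∑ i : ∀ j, Fin (c j + 1) with ∑ j, (i j : ℕ) = #S,
          #{σ : α ≃ Σ j, Fin (c j) | prefixUnion σ i = S} := by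
        refine (sum_filter_of_ne fun i _ hne => ?_).symm
        obtain ⟨σ, hσ⟩ := card_ne_zero.1 hne
        rw [← (mem_filter_univ σ).1 hσ, card_prefixUnion]
    _ = #{i : ∀ j, Fin (c j + 1) | ∑ j, (i j : ℕ) = #S} *
          ((#S)! * (Fintype.card α - #S)!) := by
        refine sum_const_nat fun i hi => ?_
        exact card_filter_prefixUnion_eq hc ((mem_filter_univ i).1 hi)

theorem sum_sum_ones_traceMatrix {e : ℕ} (hι : Fintype.card ι = e + 1) (F : Finset (Finset α)) :
    ∑ c ∈ piAntidiag (univ : Finset ι) (Fintype.card α), ∑ σ : α ≃ Σ j, Fin (c j),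
        ones (traceMatrix F σ) =
      ∑ S ∈ F, (#S + e).choose e * (Fintype.card α - #S + e).choose e *
        ((#S)! * (Fintype.card α - #S)!) := by
  rw [sum_congr rfl fun c hc => sum_ones_traceMatrix (mem_piAntidiag.1 hc).1 F, sum_comm]
  refine sum_congr rfl fun S _ => ?_
  rw [← sum_mul, ← sum_card_filter_sum_eq hι, Nat.add_sub_of_le S.card_le_univ]

theorem sum_one_div_choose_eq_sum_ones_traceMatrix {e : ℕ} (hι : Fintype.card ι = e + 1)
    (F : Finset (Finset α)) :
    ∑ S ∈ F, (1 : ℝ) / (Fintype.card α + 2 * e).choose (#S + e) =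
      (e ! : ℝ) ^ 2 / (Fintype.card α + 2 * e)! *
        ∑ c ∈ piAntidiag (univ : Finset ι) (Fintype.card α), ∑ σ : α ≃ Σ j, Fin (c j),
          (ones (traceMatrix F σ) : ℝ) := by
  have hcount := congrArg (Nat.cast (R := ℝ)) (sum_sum_ones_traceMatrix hι F)
  simp only [Nat.cast_sum] at hcount
  rw [hcount, mul_sum]
  refine sum_congr rfl fun S _ => ?_
  obtain ⟨l, hl⟩ := Nat.exists_eq_add_of_le S.card_le_univ
  rw [hl, Nat.add_sub_cancel_left, ← choose_mul_choose_mul_factorial]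
  have hchoose : ((#S + l + 2 * e).choose (#S + e) : ℝ) ≠ 0 := by
    exact_mod_cast (Nat.choose_pos (by omega)).ne'
  have hchoose_left : ((#S + e).choose e : ℝ) ≠ 0 := by
    exact_mod_cast (Nat.choose_pos (by omega)).ne'
  have hchoose_right : ((l + e).choose e : ℝ) ≠ 0 := by
    exact_mod_cast (Nat.choose_pos (by omega)).ne'
  push_cast
  field_simp

theorem sum_one_div_choose_le_of_ones_traceMatrix_le {e : ℕ} (hι : Fintype.card ι = e + 1)
    {F : Finset (Finset α)} {L : ℝ}
    (hL : ∀ c : ι → ℕ, ∑ j, c j = Fintype.card α → ∀ σ : α ≃ Σ j, Fin (c j),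
      (ones (traceMatrix F σ) : ℝ) ≤ L) :
    ∑ S ∈ F, (1 : ℝ) / (Fintype.card α + 2 * e).choose (#S + e) ≤
      L * e ! * (Fintype.card α + e)! / (Fintype.card α + 2 * e)! := by
  set n := Fintype.card α with hn
  have htotal : ∑ c ∈ piAntidiag (univ : Finset ι) n, ∑ σ : α ≃ Σ j, Fin (c j),
      (ones (traceMatrix F σ) : ℝ) ≤ (n + e).choose e * (n ! * L) := by
    rw [← card_piAntidiag_of_card_eq_add_one (s := (univ : Finset ι)) hι, ← nsmul_eq_mul]
    refine sum_le_card_nsmul _ _ _ fun c hc => ?_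
    obtain ⟨hc, -⟩ := mem_piAntidiag.1 hc
    have hcard : Fintype.card (α ≃ Σ j, Fin (c j)) = n ! :=
      Fintype.card_equiv (Fintype.equivOfCardEq (by simp [hc, hn]))
    rw [← hcard, ← nsmul_eq_mul]
    exact sum_le_card_nsmul _ _ _ fun σ _ => hL c hc σ
  have hfactorial : ((n + e).choose e : ℝ) * n ! * e ! = (n + e)! := by
    exact_mod_cast Nat.add_choose_mul_factorial_mul_factorial n e
  calc ∑ S ∈ F, (1 : ℝ) / (n + 2 * e).choose (#S + e)
      ≤ (e ! : ℝ) ^ 2 / (n + 2 * e)! * ((n + e).choose e * (n ! * L)) := by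
        rw [sum_one_div_choose_eq_sum_ones_traceMatrix hι]
        gcongr
    _ = L * e ! * (n + e)! / (n + 2 * e)! := by
        rw [← hfactorial]
        ring

end DoubleCounting

/-- The exponent `e` is `d - 1`. For `e = 0` the poset is a chain and this is Erdős's extension of
the LYM inequality to families without long chains. -/
theorem stmt_8_general {ι : Type*} [Fintype ι] [DecidableEq ι] {e : ℕ}
    (hι : Fintype.card ι = e + 1) {P : Type*} [PartialOrder P] {kk : ι → ℕ}
    {A : (∀ j, Fin (kk j)) → Bool} {β : P → ∀ j, Fin (kk j)} (hβA : ∀ p, A (β p) = true)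
    (hβinj : ∀ j, Function.Injective fun p => β p j)
    (hβord : ∀ p q : P, p < q ↔ ∀ j, β p j < β q j) {K : ℝ}
    (hex : ∀ m : ℕ, 0 < m → (exd (fun _ : ι => m) A : ℝ) ≤ K * (m : ℝ) ^ e)
    {n : ℕ} {F : Finset (Finset (Fin n))} (hF : ¬ ContainsInduced P F) :
    ∑ S ∈ F, (1 : ℝ) / (n + 2 * e).choose (#S + e) ≤ K * e ! / (e : ℝ) ^ e := by
  have hK : 0 ≤ K := by simpa using (Nat.cast_nonneg _).trans (hex 1 one_pos)
  have : Nonempty ι := Fintype.card_pos_iff.1 (by omega)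
  have htrace (c : ι → ℕ) (hc : ∑ j, c j = Fintype.card (Fin n)) (σ : Fin n ≃ Σ j, Fin (c j)) :
      (ones (traceMatrix F σ) : ℝ) ≤ K * ((n + e + 1 : ℝ) / e) ^ e := by
    have hsides : ∑ j, ((c j + 1 : ℕ) : ℝ) = n + e + 1 := by
      rw [← Nat.cast_sum, sum_add_distrib, hc]
      simp [hι, add_assoc]
    rw [← hsides]
    exact ones_le_mul_sum_div_pow hι hex
      (fun h => hF (containsInduced_of_matContains_traceMatrix hβA hβinj hβord h))
      fun j => (c j).succ_pos
  have hfactorial : ((n + e)! : ℝ) * (n + e + 1 : ℝ) ^ e ≤ (n + 2 * e)! := by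
    rw [two_mul, ← add_assoc]
    exact_mod_cast Nat.factorial_mul_pow_le_factorial (m := n + e) (n := e)
  calc ∑ S ∈ F, (1 : ℝ) / (n + 2 * e).choose (#S + e)
      ≤ K * ((n + e + 1 : ℝ) / e) ^ e * e ! * (n + e)! / (n + 2 * e)! := by
        simpa only [Fintype.card_fin] using sum_one_div_choose_le_of_ones_traceMatrix_le hι htrace
    _ = K * e ! / (e : ℝ) ^ e * ((n + e)! * (n + e + 1 : ℝ) ^ e / (n + 2 * e)!) := by
        rw [div_pow]
        ring
    _ ≤ K * e ! / (e : ℝ) ^ e :=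
        mul_le_of_le_one_right (by positivity) (div_le_one_of_le₀ hfactorial (by positivity))

/-- Under the same hypotheses as Statement 7, every induced `P`-free
family `F` of subsets of `[n]` satisfies the shifted Lubell bound
`∑_{F ∈ F} 1 / C(n+2d−2, |F|+d−1) ≤ K·(d−1)!/(d−1)^(d−1)`. -/
theorem stmt_8 (d : ℕ) (hd : 2 ≤ d) (P : Type) [PartialOrder P] [Fintype P]
    (A : (Fin d → Fin (Fintype.card P)) → Bool) (hA : IsPermMatrix A)
    (β : P → (Fin d → Fin (Fintype.card P))) (hβinj : Function.Injective β)
    (hβbij : ∀ i, A i = true ↔ ∃ p, β p = i)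
    (hβord : ∀ p p' : P, p < p' ↔ ∀ j, β p j < β p' j)
    (K : ℝ) (hK : 0 ≤ K)
    (hex : ∀ m : ℕ, 0 < m → (exd (fun _ : Fin d => m) A : ℝ) ≤ K * (m : ℝ) ^ (d - 1))
    (n : ℕ) (F : Finset (Finset (Fin n))) (hF : ¬ ContainsInduced P F) :
    ∑ S ∈ F, (1 : ℝ) / ((n + 2 * d - 2).choose (S.card + d - 1)) ≤
      K * (Nat.factorial (d - 1)) / ((d : ℝ) - 1) ^ (d - 1) := by
  obtain ⟨e, rfl⟩ : ∃ e, d = e + 1 := Nat.exists_eq_add_of_le' (by omega)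
  have hβA p : A (β p) = true := (hβbij _).2 ⟨p, rfl⟩
  have hβcoord j : Function.Injective fun p => β p j := fun p q h =>
    hβinj (hA.eq_of_apply_eq (hβA p) (hβA q) h)
  simpa [mul_add, ← add_assoc] using
    stmt_8_general (Fintype.card_fin (e + 1)) hβA hβcoord hβord hex hF
end

section
/- Let d ≥ 1, let A be a permutation d-matrix of size k^d, and let M be a d-matrix of size n×⋯×n where n = s·t for positive integers s, t. Partition M into blocks: for b = (b₁,…,b_d) ∈ {1,…,t}^d, the block S_b consists of the entries M(a₁,…,a_d) with s(b_j − 1) < a_j ≤ s·b_j for all j. Define the contracted d-matrix M'' of size t×⋯×t by M''(b) = 1 iff the block S_b contains at least one 1-entry. If M is A-free, then M'' is A-free. -/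
/-- The block of a d-matrix of size (s·t)^d at block-position `b`: the entries
`M(a)` with `s·(bⱼ − 1) < aⱼ ≤ s·bⱼ` (0-indexed: `s·bⱼ ≤ aⱼ < s·(bⱼ+1)`). -/
def blockOf {d s t : ℕ} (M : (Fin d → Fin (s * t)) → Bool) (b : Fin d → Fin t) :
    (Fin d → Fin s) → Bool :=
  fun a => M fun j => ⟨s * (b j).val + (a j).val, by
    have h2 : ((b j) : ℕ) < t := (b j).isLt
    calc s * (b j).val + (a j).val < s * ((b j).val + 1) := by
          rw [Nat.mul_succ]; omega
      _ ≤ s * t := Nat.mul_le_mul_left s h2⟩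

/-- The projection of a d-matrix along direction `i`: the (d−1)-matrix indexed by the
remaining coordinates whose entry is 1 iff some entry of `M` with those coordinates is 1. -/
def proj {d s : ℕ} (i : Fin d) (M : (Fin d → Fin s) → Bool) :
    ({j : Fin d // j ≠ i} → Fin s) → Bool :=
  fun v => decide (∃ c : Fin s,
    M (fun j => if h : j = i then c else v ⟨j, h⟩) = true)

/-!
The block containing an entry is found by applying the monotone map `x ↦ x / s` to each coordinate.
Suppose the contraction contains `A` through maps `f j`, and choose a 1-entry of `M` in the block
hit by each 1-entry of `A`. Each coordinate value belongs to only one 1-entry of `A`, so the chosen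
entries consistently prescribe lifts of the `f j` through `x ↦ x / s`. A lift of a strictly
increasing map through a monotone map is strictly increasing, so `M` contains `A`.
-/

theorem strictMono_of_monotone_comp {α β γ : Type*} [Preorder α] [LinearOrder β]
    [Preorder γ] {p : β → γ} {g : α → β} (hp : Monotone p) (hpg : StrictMono (p ∘ g)) :
    StrictMono g :=
  fun _ _ h => hp.reflect_lt (hpg h)

theorem exists_lift_extending {σ α β γ : Type*} {p : β → γ} (hp : Function.Surjective p)
    {f : α → γ} {u : σ → α} (hu : Function.Injective u) {y : σ → β}
    (hy : ∀ i, p (y i) = f (u i)) :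
    ∃ g : α → β, p ∘ g = f ∧ ∀ i, g (u i) = y i := by
  refine ⟨Function.extend u y (Function.surjInv hp ∘ f), funext fun v => ?_, hu.extend_apply _ _⟩
  by_cases hv : ∃ i, u i = v
  · obtain ⟨i, rfl⟩ := hv
    rw [Function.comp_apply, hu.extend_apply, hy]
  · rw [Function.comp_apply, Function.extend_apply' _ _ v hv, Function.comp_apply,
      Function.surjInv_eq hp]

theorem IsPermMatrix.injective_apply {d k : ℕ} {A : (Fin d → Fin k) → Bool}
    (hA : IsPermMatrix A) (j : Fin d) :
    Function.Injective fun i : {i // A i = true} => i.1 j :=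
  fun i i' h => Subtype.ext <| (hA.2 j (i'.1 j)).unique ⟨i.2, h⟩ ⟨i'.2, rfl⟩

/-- The position along one axis of the block of side `s` containing the index `x`. Unlike in
`Fin.divNat`, the block size is the left factor, as in `blockOf`. -/
def blockIndex {s t : ℕ} (x : Fin (s * t)) : Fin t :=
  ⟨x / s, Nat.div_lt_of_lt_mul x.isLt⟩

theorem blockIndex_monotone {s t : ℕ} : Monotone (blockIndex : Fin (s * t) → Fin t) :=
  fun _ _ h => Nat.div_le_div_right h

theorem blockIndex_surjective {s t : ℕ} (hs : 0 < s) :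
    Function.Surjective (blockIndex : Fin (s * t) → Fin t) :=
  fun b => ⟨⟨s * b, Nat.mul_lt_mul_of_pos_left b.isLt hs⟩, Fin.ext (Nat.mul_div_cancel_left b hs)⟩

theorem exists_blockIndex_eq_of_blockOf {d s t : ℕ} {M : (Fin d → Fin (s * t)) → Bool}
    {b : Fin d → Fin t} {a : Fin d → Fin s} (h : blockOf M b a = true) :
    ∃ x, M x = true ∧ ∀ j, blockIndex (x j) = b j := by
  refine ⟨_, h, fun j => Fin.ext ?_⟩
  change (s * (b j : ℕ) + a j) / s = b j
  rw [Nat.mul_add_div (a j).pos, Nat.div_eq_of_lt (a j).isLt, add_zero]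

/-- The blocks are the products of the fibres of the maps `p j`. -/
theorem stmt_12_general {ι : Type*} {kk nn tt : ι → ℕ} {p : ∀ j, Fin (nn j) → Fin (tt j)}
    (hp : ∀ j, Monotone (p j)) (hp_surj : ∀ j, Function.Surjective (p j))
    {A : (∀ j, Fin (kk j)) → Bool}
    (hA : ∀ j, Function.Injective fun i : {i // A i = true} => i.1 j)
    {M : (∀ j, Fin (nn j)) → Bool} (hM : ¬ MatContains M A)
    {M'' : (∀ j, Fin (tt j)) → Bool}
    (hM'' : ∀ b, M'' b = true → ∃ x, M x = true ∧ ∀ j, p j (x j) = b j) :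
    ¬ MatContains M'' A := by
  rintro ⟨f, hf, hfA⟩
  choose x hMx hpx using fun i : {i // A i = true} => hM'' _ (hfA i.1 i.2)
  choose g hpg hgx using fun j => exists_lift_extending (hp_surj j) (hA j) fun i => hpx i j
  have hg : ∀ j, StrictMono (g j) := fun j =>
    strictMono_of_monotone_comp (hp j) ((hpg j).symm ▸ hf j)
  refine hM ⟨g, hg, fun i hi => ?_⟩
  rw [show (fun j => g j (i j)) = x ⟨i, hi⟩ from funext fun j => hgx j ⟨i, hi⟩]
  exact hMx ⟨i, hi⟩

/-- If `A` is a permutation d-matrix and `M` is an `A`-free d-matrix of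
size `(s·t)^d`, then the contracted d-matrix `M''` of size `t^d`, whose entry at `b` is 1
iff the block `S_b` contains a 1-entry, is also `A`-free. -/
theorem stmt_12 (d k s t : ℕ) (hd : 1 ≤ d) (hs : 0 < s) (ht : 0 < t)
    (A : (Fin d → Fin k) → Bool) (hA : IsPermMatrix A)
    (M : (Fin d → Fin (s * t)) → Bool) (hM : ¬ MatContains M A)
    (M'' : (Fin d → Fin t) → Bool)
    (hM'' : ∀ b, M'' b = true ↔ ∃ a : Fin d → Fin s, blockOf M b a = true) :
    ¬ MatContains M'' A :=
  stmt_12_general (fun _ => blockIndex_monotone) (fun _ => blockIndex_surjective hs)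
    hA.injective_apply hM fun b hb => ((hM'' b).1 hb).elim fun _ => exists_blockIndex_eq_of_blockOf
end
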